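/- Let G = (V ∪ {s}, E) be a finite sandpile graph, W ⊆ V, ξ generalized minimal on W, and η ∈ R_G with η_W = ξ. Let V_1, …, V_K be the connected components of the induced subgraph of G on (V ∪ {s}) \ W that do not contain s, and W' = W ∪ V_1 ∪ ⋯ ∪ V_K. Let B ⊆ V be a burnt set with V \ W' ⊆ B ⊆ V \ (V_1 ∪ ⋯ ∪ V_K) such that no vertex of B ∩ W is adjacent to any V_j. Then for each j, at most one vertex of W \ B adjacent to V_j is burnable for η given {s} ∪ B (i.e., with r_j denoting the number of vertices of W adjacent to V_j that become burnable at this stage, r_j ∈ {0,1}). -/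

import Mathlib

open scoped Classical

namespace Sandpile

/-- A finite sandpile multigraph on vertex set `α` (which plays the role of `V ∪ {s}`),
given by a distinguished sink and symmetric edge multiplicities. -/
structure Graph (α : Type*) where
  sink : α
  b : α → α → ℕ

namespace Graph

variable {α : Type*} [Fintype α] [DecidableEq α] (G : Graph α)

/-- The non-sink vertices (the set `V`). -/
def VSet : Finset α := Finset.univ.erase G.sink

/-- Degree restricted to a finite set of vertices: `deg_F(x) = ∑_{y ∈ F} b_{xy}`. -/
def degIn (F : Finset α) (x : α) : ℕ := ∑ y ∈ F, G.b x y

/-- Total degree `deg_G(x)`. -/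
def deg (x : α) : ℕ := ∑ y, G.b x y

/-- `G` is a genuine finite sandpile graph: symmetric multiplicities, no loops, connected. -/
def IsSandpileGraph : Prop :=
  (∀ x y, G.b x y = G.b y x) ∧ (∀ x, G.b x x = 0) ∧
    ∀ x y : α, Relation.ReflTransGen (fun u v => 0 < G.b u v) x y

/-- Connectivity of the subgraph induced on the vertex set `S`. -/
def ConnectedOn (S : Set α) : Prop :=
  ∀ x ∈ S, ∀ y ∈ S,
    Relation.ReflTransGen (fun u v => u ∈ S ∧ v ∈ S ∧ 0 < G.b u v) x y

/-- A sandpile is stable if every non-sink vertex carries fewer particles than its degree. -/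
def Stable (η : α → ℕ) : Prop := ∀ x ∈ G.VSet, η x < G.deg x

/-- `η` is ample for `F` if some vertex of `F` has at least `deg_F` particles. -/
def AmpleFor (η : α → ℕ) (F : Finset α) : Prop := ∃ x ∈ F, G.degIn F x ≤ η x

/-- Dhar's burning test: recurrent = stable and ample for every nonempty `F ⊆ V`. -/
def Recurrent (η : α → ℕ) : Prop :=
  G.Stable η ∧ ∀ F ⊆ G.VSet, F.Nonempty → G.AmpleFor η F

/-- Remove one particle at `w` (`η - δ_w`). -/
def SubOne (η : α → ℕ) (w : α) : α → ℕ := fun x => if x = w then η x - 1 else η x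

/-- `η` and `ξ` agree on `W` (restriction `η_W = ξ_W`). -/
def EqOn (η ξ : α → ℕ) (W : Finset α) : Prop := ∀ x ∈ W, η x = ξ x

/-- `ξ` is (generalized) minimal on `W`: it extends to a recurrent sandpile, and no
recurrent extension stays recurrent after removing a particle from a vertex of `W`.
(`η - δ_w ∉ R_G` holds automatically if `η w = 0`, as then `η - δ_w` is not a configuration.) -/
def Minimal (W : Finset α) (ξ : α → ℕ) : Prop :=
  (∃ η, G.Recurrent η ∧ EqOn η ξ W) ∧
    ∀ η, G.Recurrent η → EqOn η ξ W → ∀ w ∈ W, ¬(1 ≤ η w ∧ G.Recurrent (SubOne η w))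

/-- `ν_G[P]`: the uniform probability of the event `P` under the uniform measure on
recurrent configurations (configurations are normalized to vanish at the sink). -/
noncomputable def prob (P : (α → ℕ) → Prop) : ℝ :=
  (Nat.card {η : α → ℕ // η G.sink = 0 ∧ G.Recurrent η ∧ P η} : ℝ) /
    (Nat.card {η : α → ℕ // η G.sink = 0 ∧ G.Recurrent η} : ℝ)

/-- The graph Laplacian with the sink row and column deleted. -/
noncomputable def lapRed :
    Matrix {x : α // x ≠ G.sink} {x : α // x ≠ G.sink} ℝ :=
  Matrix.of fun x y =>
    if (x : α) = (y : α) then (G.deg ↑x : ℝ) else -(G.b ↑x ↑y : ℝ)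

/-- `H = (Δ')⁻¹`, extended by `0` on the sink. -/
noncomputable def Hfun (x y : α) : ℝ :=
  if hx : x = G.sink then 0
  else if hy : y = G.sink then 0
  else (G.lapRed)⁻¹ ⟨x, hx⟩ ⟨y, hy⟩

/-- Oriented edges of the multigraph `G`: an edge from `p.1` to `p.2.1`, with copy
index `p.2.2` (parallel edges are distinct). -/
abbrev OEdge (G : Graph α) : Type _ := {p : α × α × ℕ // p.2.2 < G.b p.1 p.2.1}

/-- `K_G(e,f) = δ_{ef} - Y_G(e,f)` where `Y_G` is the transfer current matrix. -/
noncomputable def Kmat (e f : G.OEdge) : ℝ :=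
  (if e = f then 1 else 0) -
    (G.Hfun e.1.1 f.1.1 - G.Hfun e.1.1 f.1.2.1 - G.Hfun e.1.2.1 f.1.1 +
      G.Hfun e.1.2.1 f.1.2.1)

/-- Unburnt sets of phase one of the burning algorithm based on `Q`:
`U_0 = V`, `U_i = U_{i-1} \ B_i` with `B_i = {x ∈ U_{i-1} \ Q : η x ≥ deg_{U_{i-1}} x}`. -/
def U1 (η : α → ℕ) (Q : Finset α) : ℕ → Finset α
  | 0 => G.VSet
  | i + 1 => (U1 η Q i).filter fun x => x ∈ Q ∨ η x < G.degIn (U1 η Q i) x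

/-- The final unburnt set `U^{(1)}_I` of phase one (the sequence `U1` is decreasing,
hence stabilizes after at most `|α|` steps). -/
def U1lim (η : α → ℕ) (Q : Finset α) : Finset α := G.U1 η Q (Fintype.card α)

/-- Unburnt sets of phase two of the burning algorithm based on `Q`. -/
def U2 (η : α → ℕ) (Q : Finset α) : ℕ → Finset α
  | 0 => G.U1lim η Q
  | i + 1 => (U2 η Q i).filter fun x => η x < G.degIn (U2 η Q i) x

/-- Recurrence in the wired graph `G_W` (note `deg_{G_W}(x) = deg_G(x)` for `x ∈ W`,
and `deg_F` for `F ⊆ W` is the same in `G_W` and `G`). -/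
def WiredRecurrent (W : Finset α) (ξ : α → ℕ) : Prop :=
  (∀ x ∈ W, ξ x < G.deg x) ∧ ∀ F ⊆ W, F.Nonempty → ∃ x ∈ F, G.degIn F x ≤ ξ x

/-- `ξ` is minimal in the wired graph `G_W`. -/
def WiredMinimal (W : Finset α) (ξ : α → ℕ) : Prop :=
  G.WiredRecurrent W ξ ∧ ∀ w ∈ W, ¬(1 ≤ ξ w ∧ G.WiredRecurrent W (SubOne ξ w))

/-- Entry points `E(ξ,W)` of `ξ ∈ R_{G_W}`: vertices burnable at the first step. -/
def entryPoints (W : Finset α) (ξ : α → ℕ) : Finset α :=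
  W.filter fun w => G.degIn W w ≤ ξ w

/-- `x` is burnable given the burnt set `S`: `η(x) ≥ deg_G(x) − ∑_{y ∈ S} b_{xy}`. -/
def Burnable (η : α → ℕ) (S : Finset α) (x : α) : Prop :=
  G.degIn (Finset.univ \ S) x ≤ η x

/-- A burning sequence starting from the burnt set `S`. -/
def IsBurnSeq (η : α → ℕ) : Finset α → List α → Prop
  | _, [] => True
  | S, x :: l => x ∉ S ∧ G.Burnable η S x ∧ IsBurnSeq η (insert x S) l

/-- `B` is a burnt set for `η`: some burning sequence from `{s}` burns exactly `B`. -/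
def IsBurntSet (η : α → ℕ) (B : Finset α) : Prop :=
  ∃ l : List α, G.IsBurnSeq η {G.sink} l ∧ l.toFinset = B

/-- Reachability within the vertex set `S`. -/
def ReachIn (S : Set α) (x y : α) : Prop :=
  Relation.ReflTransGen (fun u v => u ∈ S ∧ v ∈ S ∧ 0 < G.b u v) x y

/-- `C` is a connected component of the subgraph induced on `(V ∪ {s}) \ W`
that does not contain the sink. -/
def IsHoleComp (W C : Finset α) : Prop :=
  C.Nonempty ∧ G.sink ∉ C ∧
    ∀ x ∈ C, ∀ y : α, y ∈ C ↔ y ∉ W ∧ G.ReachIn {a : α | a ∉ W} x y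

/-- Adjacency induced by a finite set `t` of (undirected, indexed) edges. -/
def edgeRel (t : Finset (Sym2 α × ℕ)) (u v : α) : Prop := ∃ k : ℕ, (s(u, v), k) ∈ t

/-- `t` is a spanning tree of the multigraph `G`: it consists of edges of `G`
(parallel edges distinct), it spans (connected), and every edge is a bridge
(equivalently, it is acyclic). -/
def IsSpanningTree (t : Finset (Sym2 α × ℕ)) : Prop :=
  (∀ p ∈ t, ∃ x y : α, p.1 = s(x, y) ∧ p.2 < G.b x y) ∧
  (∀ u v : α, Relation.ReflTransGen (edgeRel t) u v) ∧
  ∀ p ∈ t, ∀ x y : α, p.1 = s(x, y) →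
    ¬ Relation.ReflTransGen (edgeRel (t.erase p)) x y

/-- Adjacency induced by a set of (undirected, indexed) edges. -/
def edgeRelSet (t : Set (Sym2 α × ℕ)) (u v : α) : Prop := ∃ k : ℕ, (s(u, v), k) ∈ t

/-- Set version of `IsSpanningTree`. -/
def IsSpanningTreeSet (t : Set (Sym2 α × ℕ)) : Prop :=
  (∀ p ∈ t, ∃ x y : α, p.1 = s(x, y) ∧ p.2 < G.b x y) ∧
  (∀ u v : α, Relation.ReflTransGen (edgeRelSet t) u v) ∧
  ∀ p ∈ t, ∀ x y : α, p.1 = s(x, y) →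
    ¬ Relation.ReflTransGen (edgeRelSet (t \ {p})) x y

/-- The step at which `x` burns in phase one (0 for the sink; `sInf ∅ = 0` if `x`
never burns in phase one). -/
noncomputable def p1time (η : α → ℕ) (Q : Finset α) (x : α) : ℕ :=
  sInf {i : ℕ | x ∉ G.U1 η Q i}

/-- The step at which `x` burns in phase two. -/
noncomputable def p2time (η : α → ℕ) (Q : Finset α) (x : α) : ℕ :=
  sInf {i : ℕ | x ∉ G.U2 η Q i}

/-- Vertices burnt at step `i` of phase one (`B^{(1)}_0 = {s}`). -/
def B1 (η : α → ℕ) (Q : Finset α) : ℕ → Finset α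
  | 0 => {G.sink}
  | i + 1 => G.U1 η Q i \ G.U1 η Q (i + 1)

/-- Vertices burnt at step `i` of phase two (`B^{(2)}_0` = everything burnt in phase
one, including the sink). -/
def B2 (η : α → ℕ) (Q : Finset α) : ℕ → Finset α
  | 0 => Finset.univ \ G.U1lim η Q
  | i + 1 => G.U2 η Q i \ G.U2 η Q (i + 1)

/-- The set `B^{(p)}_{i-1}` of vertices burnt at the step preceding the step at which
`x` burns (in the appropriate phase). -/
noncomputable def prevBurnt (η : α → ℕ) (Q : Finset α) (x : α) : Finset α :=
  if x ∈ G.U1lim η Q then G.B2 η Q (G.p2time η Q x - 1)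
  else G.B1 η Q (G.p1time η Q x - 1)

/-- The set `D = B^{(p)}_0 ∪ ⋯ ∪ B^{(p)}_{i-1}` of vertices burnt strictly before `x`
in the phase in which `x` burns. -/
noncomputable def burntBefore (η : α → ℕ) (Q : Finset α) (x : α) : Finset α :=
  if x ∈ G.U1lim η Q then Finset.univ \ G.U2 η Q (G.p2time η Q x - 1)
  else Finset.univ \ G.U1 η Q (G.p1time η Q x - 1)

/-- `j = η(x) − deg_G(x) + n_x` with `n_x = ∑_{y ∈ D} b_{xy}`. -/
noncomputable def jX (η : α → ℕ) (Q : Finset α) (x : α) : ℕ :=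
  η x + G.degIn (G.burntBefore η Q x) x - G.deg x

/-- The defining property of the edge `e_x` of the burning bijection based on `Q`:
`e_x` has tail `x`, head burnt at the previous step, and exactly `j` smaller elements
of `P_x` under the given edge order `lt x`. -/
def EdgeSpec (lt : α → G.OEdge → G.OEdge → Prop) (η : α → ℕ) (Q : Finset α)
    (x : α) (e : G.OEdge) : Prop :=
  e.1.1 = x ∧ e.1.2.1 ∈ G.prevBurnt η Q x ∧
    {f : G.OEdge | f.1.1 = x ∧ f.1.2.1 ∈ G.prevBurnt η Q x ∧ lt x f e}.ncard =
      G.jX η Q x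

/-- The (oriented) spanning tree `t(η) = {e_x : x ∈ V}` assigned to `η` by the
burning bijection based on `Q`. -/
def treeOf (lt : α → G.OEdge → G.OEdge → Prop) (η : α → ℕ) (Q : Finset α) :
    Set G.OEdge :=
  {e | ∃ x ∈ G.VSet, G.EdgeSpec lt η Q x e}

/-- Forget the orientation of an oriented edge. -/
def undir (e : G.OEdge) : Sym2 α × ℕ := (s(e.1.1, e.1.2.1), e.1.2.2)

/-- Total burning order: phase-one vertices first (at their phase-one step), then
phase-two vertices. -/
noncomputable def burnOrder (η : α → ℕ) (Q : Finset α) (x : α) : ℕ :=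
  if x ∈ G.U1lim η Q then Fintype.card α + 1 + G.p2time η Q x else G.p1time η Q x

/-- Edge multiplicities of the auxiliary graph `G_W^*` (on vertex set `W ∪ {s}`):
`b*_{xy} = b_{xy}` for `x,y ∈ W`; `b*_{xs} = ∑_{z ∉ W} b_{xz}` for `x ∈ Q` and
`b*_{xs} = 0` for `x ∈ W \ Q`. -/
def bstar (Q W : Finset α) (x y : α) : ℕ :=
  if x ∈ W ∧ y ∈ W then G.b x y
  else if x ∈ W ∧ y = G.sink then
    if x ∈ Q then ∑ z ∈ Finset.univ \ W, G.b x z else 0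
  else if y ∈ W ∧ x = G.sink then
    if y ∈ Q then ∑ z ∈ Finset.univ \ W, G.b z y else 0
  else 0

/-- Recurrence in the auxiliary graph `G_W^*`. -/
def StarRecurrent (Q W : Finset α) (ζ : α → ℕ) : Prop :=
  (∀ x ∈ W, ζ x < ∑ y ∈ insert G.sink W, G.bstar Q W x y) ∧
    ∀ F ⊆ W, F.Nonempty → ∃ x ∈ F, (∑ y ∈ F, G.bstar Q W x y) ≤ ζ x

end Graph

end Sandpile

open Sandpile

/-!
Suppose two distinct vertices `x`, `y` adjacent to the component `C` are burnable once `B` has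
burnt. Raise `η` to its largest stable value on `C`, which leaves `W` untouched, and then remove
a particle at `y`. The result is still recurrent: after `B` burns, `x` burns because its height
has not dropped; the fire then spreads from `x` through the connected, full set `C`; and the
edge from `y` to `C` makes up for the particle removed at `y`. This contradicts minimality.
Since recurrence is ampleness for every nonempty `F ⊆ V`, the burning procedure is replaced by a
case distinction on which of `B`, `C`, `x`, `y` the set `F` meets.
-/

namespace Sandpile.Graph

section Multiplicities

variable {α : Type*} {G : Graph α}

theorem degIn_mono {F F' : Finset α} (h : F ⊆ F') (x : α) : G.degIn F x ≤ G.degIn F' x :=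
  Finset.sum_le_sum_of_subset h

theorem degIn_lt_degIn {F F' : Finset α} (h : F ⊆ F') {x z : α} (hzF' : z ∈ F') (hzF : z ∉ F)
    (hxz : 0 < G.b x z) : G.degIn F x < G.degIn F' x :=
  Finset.sum_lt_sum_of_subset h hzF' hzF hxz fun _ _ _ => Nat.zero_le _

theorem AmpleFor.mono {η η' : α → ℕ} {F : Finset α} (h : G.AmpleFor η F)
    (hle : ∀ x ∈ F, η x ≤ η' x) : G.AmpleFor η' F :=
  let ⟨x, hxF, hx⟩ := h
  ⟨x, hxF, hx.trans (hle x hxF)⟩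

theorem ConnectedOn.exists_adj_mem_notMem {S : Set α} (hS : G.ConnectedOn S) {T : Set α} {x y : α}
    (hxS : x ∈ S) (hxT : x ∈ T) (hyS : y ∈ S) (hyT : y ∉ T) :
    ∃ u ∈ S, u ∈ T ∧ ∃ v ∈ S, v ∉ T ∧ 0 < G.b u v := by
  by_contra! hclosed
  have hreach_mem (v : α) (hv : G.ReachIn S x v) : v ∈ T := by
    induction hv with
    | refl => exact hxT
    | @tail u v _ huv hu =>
      obtain ⟨huS, hvS, hb⟩ := huv
      by_contra hvT
      exact hb.ne' (Nat.le_zero.1 (hclosed u huS hu v hvS hvT))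
  exact hyT (hreach_mem y (hS x hxS y hyS))

theorem ConnectedOn.exists_adj_notMem_of_adj {C : Set α} (hC : G.ConnectedOn C) {T : Set α}
    {w x z : α} (hwC : w ∈ C) (hwT : w ∈ T) (hzC : z ∈ C) (hzx : 0 < G.b z x) (hxT : x ∉ T) :
    ∃ u ∈ C, u ∈ T ∧ ∃ v ∉ T, 0 < G.b u v := by
  by_cases hzT : z ∈ T
  · exact ⟨z, hzC, hzT, x, hxT, hzx⟩
  · obtain ⟨u, huC, huT, v, _, hvT, huv⟩ := hC.exists_adj_mem_notMem hwC hwT hzC hzT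
    exact ⟨u, huC, huT, v, hvT, huv⟩

theorem IsHoleComp.disjoint {W C : Finset α} (hC : G.IsHoleComp W C) : Disjoint C W :=
  Finset.disjoint_left.2 fun x hx => ((hC.2.2 x hx x).1 hx).1

theorem IsHoleComp.connectedOn {W C : Finset α} (hC : G.IsHoleComp W C) :
    G.ConnectedOn (C : Set α) := by
  intro x hx y hy
  have hcomp := hC.2.2 x hx
  have hy_reach := ((hcomp y).1 hy).2
  clear hy
  induction hy_reach with
  | refl => exact .refl
  | @tail u v hxu huv ih =>
    have hu : u ∈ C := (hcomp u).2 ⟨huv.1, hxu⟩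
    have hv : v ∈ C := (hcomp v).2 ⟨huv.2.1, hxu.tail huv⟩
    exact ih.tail ⟨hu, hv, huv.2.2⟩

end Multiplicities

section SubOne

variable {α : Type*} [DecidableEq α] {G : Graph α} {η : α → ℕ} {w : α}

theorem subOne_self (η : α → ℕ) (w : α) : SubOne η w w = η w - 1 :=
  if_pos rfl

theorem subOne_of_ne (η : α → ℕ) {w x : α} (hx : x ≠ w) : SubOne η w x = η x :=
  if_neg hx

theorem subOne_le (η : α → ℕ) (w x : α) : SubOne η w x ≤ η x := by
  unfold SubOne
  split_ifs
  exacts [Nat.sub_le _ _, le_rfl]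

theorem ampleFor_subOne_of_ne {F : Finset α} {x : α} (hxF : x ∈ F) (hxw : x ≠ w)
    (hx : G.degIn F x ≤ η x) : G.AmpleFor (SubOne η w) F :=
  ⟨x, hxF, by rwa [subOne_of_ne η hxw]⟩

theorem ampleFor_subOne_of_lt {F : Finset α} (hwF : w ∈ F) (hw : G.degIn F w < η w) :
    G.AmpleFor (SubOne η w) F :=
  ⟨w, hwF, by rw [subOne_self]; exact Nat.le_sub_one_of_lt hw⟩

theorem AmpleFor.subOne_of_notMem {F : Finset α} (h : G.AmpleFor η F) (hw : w ∉ F) :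
    G.AmpleFor (SubOne η w) F :=
  let ⟨_, hxF, hx⟩ := h
  ampleFor_subOne_of_ne hxF (ne_of_mem_of_not_mem hxF hw) hx

end SubOne

variable {α : Type*} [Fintype α] [DecidableEq α] {G : Graph α} {η : α → ℕ}

theorem sink_notMem_of_subset_VSet {F : Finset α} (hF : F ⊆ G.VSet) : G.sink ∉ F :=
  fun h => Finset.notMem_erase _ _ (hF h)

theorem Stable.subOne (hη : G.Stable η) (w : α) : G.Stable (SubOne η w) :=
  fun x hx => (subOne_le η w x).trans_lt (hη x hx)

theorem Burnable.degIn_le {S F : Finset α} {x : α} (hx : G.Burnable η S x) (hFS : Disjoint F S) :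
    G.degIn F x ≤ η x :=
  (degIn_mono (Finset.subset_sdiff.2 ⟨Finset.subset_univ F, hFS⟩) x).trans hx

theorem Burnable.degIn_lt {S F : Finset α} {x z : α} (hx : G.Burnable η S x) (hFS : Disjoint F S)
    (hzF : z ∉ F) (hzS : z ∉ S) (hxz : 0 < G.b x z) : G.degIn F x < η x :=
  (degIn_lt_degIn (Finset.subset_sdiff.2 ⟨Finset.subset_univ F, hFS⟩)
    (Finset.mem_sdiff.2 ⟨Finset.mem_univ z, hzS⟩) hzF hxz).trans_le hx

-- The first vertex of `F` to burn does so while all of `F` is still unburnt.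
theorem IsBurnSeq.exists_degIn_le {S F : Finset α} {l : List α} (hl : G.IsBurnSeq η S l)
    (hFS : Disjoint F S) {x : α} (hxF : x ∈ F) (hxl : x ∈ l) :
    ∃ v ∈ F, v ∈ l ∧ G.degIn F v ≤ η v := by
  induction l generalizing S with
  | nil => exact absurd hxl List.not_mem_nil
  | cons a l ih =>
    obtain ⟨_, ha, hl⟩ := hl
    by_cases haF : a ∈ F
    · exact ⟨a, haF, List.mem_cons_self, ha.degIn_le hFS⟩
    · have hxl' : x ∈ l := List.mem_of_ne_of_mem (ne_of_mem_of_not_mem hxF haF) hxl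
      obtain ⟨v, hvF, hvl, hv⟩ := ih hl (Finset.disjoint_insert_right.2 ⟨haF, hFS⟩) hxl'
      exact ⟨v, hvF, List.mem_cons_of_mem a hvl, hv⟩

theorem IsBurntSet.exists_degIn_le {B F : Finset α} (hB : G.IsBurntSet η B) (hF : G.sink ∉ F)
    (hFB : ¬Disjoint F B) : ∃ v ∈ F, v ∈ B ∧ G.degIn F v ≤ η v := by
  obtain ⟨l, hl, rfl⟩ := hB
  obtain ⟨x, hxF, hxl⟩ := Finset.not_disjoint_iff.1 hFB
  simpa only [List.mem_toFinset] using
    hl.exists_degIn_le (Finset.disjoint_singleton_right.2 hF) hxF (List.mem_toFinset.1 hxl)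

/-- The sandpile obtained from `η` by raising every vertex of `C` to `deg - 1`, its largest stable
height. The truncated subtraction only matters at isolated vertices. -/
def fill (G : Graph α) (η : α → ℕ) (C : Finset α) : α → ℕ :=
  C.piecewise (fun x => G.deg x - 1) η

theorem fill_of_mem {C : Finset α} {x : α} (hx : x ∈ C) : G.fill η C x = G.deg x - 1 :=
  C.piecewise_eq_of_mem _ _ hx

theorem fill_of_notMem {C : Finset α} {x : α} (hx : x ∉ C) : G.fill η C x = η x :=
  C.piecewise_eq_of_notMem _ _ hx

theorem Stable.le_fill (hη : G.Stable η) (C : Finset α) {x : α} (hx : x ∈ G.VSet) :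
    η x ≤ G.fill η C x := by
  by_cases hxC : x ∈ C
  · rw [fill_of_mem hxC]
    exact Nat.le_sub_one_of_lt (hη x hx)
  · rw [fill_of_notMem hxC]

theorem Stable.fill (hη : G.Stable η) (C : Finset α) : G.Stable (G.fill η C) := by
  intro x hx
  by_cases hxC : x ∈ C
  · rw [fill_of_mem hxC]
    exact Nat.sub_one_lt_of_lt (hη x hx)
  · rw [fill_of_notMem hxC]
    exact hη x hx

theorem Recurrent.fill (hη : G.Recurrent η) (C : Finset α) : G.Recurrent (G.fill η C) :=
  ⟨hη.1.fill C, fun F hFV hF => (hη.2 F hFV hF).mono fun _ hx => hη.1.le_fill C (hFV hx)⟩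

theorem degIn_le_fill {C F : Finset α} {u v : α} (hu : u ∈ C) (hv : v ∉ F) (huv : 0 < G.b u v) :
    G.degIn F u ≤ G.fill η C u := by
  rw [fill_of_mem hu]
  exact Nat.le_sub_one_of_lt (degIn_lt_degIn (Finset.subset_univ F) (Finset.mem_univ v) hv huv)

theorem Recurrent.subOne_fill (hη : G.Recurrent η) {B C : Finset α} (hB : G.IsBurntSet η B)
    (hC : G.ConnectedOn (C : Set α)) (hCB : Disjoint C (insert G.sink B)) {x y : α} (hxy : x ≠ y)
    (hx : G.Burnable η (insert G.sink B) x) (hxC : ∃ z ∈ C, 0 < G.b z x)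
    (hyC : y ∉ C) (hyB : y ∉ B) (hy : G.Burnable η (insert G.sink B) y)
    (hyz : ∃ z ∈ C, 0 < G.b y z) : G.Recurrent (SubOne (G.fill η C) y) := by
  refine ⟨(hη.1.fill C).subOne y, fun F hFV hF => ?_⟩
  have hFs : G.sink ∉ F := sink_notMem_of_subset_VSet hFV
  have hle {v : α} (hv : v ∈ F) : η v ≤ G.fill η C v := hη.1.le_fill C (hFV hv)
  by_cases hFB : Disjoint F B
  · have hFS : Disjoint F (insert G.sink B) := Finset.disjoint_insert_right.2 ⟨hFs, hFB⟩
    by_cases hFC : Disjoint F C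
    · by_cases hyF : y ∈ F
      · obtain ⟨z, hzC, hyz⟩ := hyz
        refine ampleFor_subOne_of_lt hyF ?_
        rw [fill_of_notMem hyC]
        exact hy.degIn_lt hFS (Finset.disjoint_right.1 hFC hzC) (Finset.disjoint_left.1 hCB hzC) hyz
      · exact ((hη.fill C).2 F hFV hF).subOne_of_notMem hyF
    · by_cases hxF : x ∈ F
      · exact ampleFor_subOne_of_ne hxF hxy ((hx.degIn_le hFS).trans (hle hxF))
      · obtain ⟨w, hwF, hwC⟩ := Finset.not_disjoint_iff.1 hFC
        obtain ⟨z, hzC, hzx⟩ := hxC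
        obtain ⟨u, huC, huF, v, hvF, huv⟩ :=
          hC.exists_adj_notMem_of_adj (T := (F : Set α)) hwC hwF hzC hzx hxF
        exact ampleFor_subOne_of_ne huF (ne_of_mem_of_not_mem huC hyC) (degIn_le_fill huC hvF huv)
  · obtain ⟨v, hvF, hvB, hv⟩ := hB.exists_degIn_le hFs hFB
    exact ampleFor_subOne_of_ne hvF (ne_of_mem_of_not_mem hvB hyB) (hv.trans (hle hvF))

end Sandpile.Graph

theorem statement_11_general {α : Type*} [Fintype α] [DecidableEq α] {G : Sandpile.Graph α}
    {W : Finset α} {ξ : α → ℕ} (hmin : G.Minimal W ξ)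
    {η : α → ℕ} (hη : G.Recurrent η) (hηW : Graph.EqOn η ξ W)
    {B : Finset α} (hB : G.IsBurntSet η B)
    {C : Finset α} (hC : G.ConnectedOn (C : Set α)) (hCW : Disjoint C W)
    (hCB : Disjoint C (insert G.sink B)) {x y : α}
    (hx : G.Burnable η (insert G.sink B) x) (hxC : ∃ z ∈ C, 0 < G.b z x)
    (hyW : y ∈ W) (hyB : y ∉ B) (hy : G.Burnable η (insert G.sink B) y)
    (hyC : ∃ z ∈ C, 0 < G.b y z) : x = y := by
  by_contra hxy
  have hWC {w : α} (hw : w ∈ W) : w ∉ C := Finset.disjoint_right.1 hCW hw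
  have hext : Graph.EqOn (G.fill η C) ξ W := fun w hw =>
    (Graph.fill_of_notMem (hWC hw)).trans (hηW w hw)
  have hpos : 1 ≤ G.fill η C y := by
    obtain ⟨z, hzC, hyz⟩ := hyC
    rw [Graph.fill_of_notMem (hWC hyW)]
    exact Nat.one_le_of_lt <| hy.degIn_lt (Finset.disjoint_empty_left _) (Finset.notMem_empty z)
      (Finset.disjoint_left.1 hCB hzC) hyz
  exact hmin.2 _ (hη.fill C) hext y hyW
    ⟨hpos, hη.subOne_fill hB hC hCB hxy hx hxC (hWC hyW) hyB hy hyC⟩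

/-- Lemma `one_entry`. In the burning of a recurrent extension of a
generalized minimal configuration, for each hole component `C` at most one vertex of
`W` adjacent to `C` is burnable at this stage. -/
theorem statement_11 {α : Type*} [Fintype α] [DecidableEq α] (G : Sandpile.Graph α)
    (hG : G.IsSandpileGraph) (W : Finset α) (hWne : W.Nonempty) (hWs : G.sink ∉ W)
    (ξ : α → ℕ) (hstable : ∀ x ∈ W, ξ x < G.deg x) (hmin : G.Minimal W ξ)
    (η : α → ℕ) (hη : G.Recurrent η) (hηW : Graph.EqOn η ξ W)
    (B : Finset α) (hB : G.IsBurntSet η B) (hBV : B ⊆ G.VSet)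
    (hB1 : ∀ x ∈ G.VSet, x ∉ W → (∀ C : Finset α, G.IsHoleComp W C → x ∉ C) → x ∈ B)
    (hB2 : ∀ C : Finset α, G.IsHoleComp W C → ∀ x ∈ B, x ∉ C)
    (hB3 : ∀ C : Finset α, G.IsHoleComp W C → ∀ x ∈ B, x ∈ W → ∀ z ∈ C, G.b x z = 0)
    (C : Finset α) (hC : G.IsHoleComp W C) :
    ∀ y₁ y₂ : α,
      y₁ ∈ W → y₁ ∉ B → G.Burnable η (insert G.sink B) y₁ → (∃ z ∈ C, 0 < G.b y₁ z) →
      y₂ ∈ W → y₂ ∉ B → G.Burnable η (insert G.sink B) y₂ → (∃ z ∈ C, 0 < G.b y₂ z) →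
      y₁ = y₂ := by
  rintro y₁ y₂ - - hb₁ ⟨z, hzC, hz⟩ hy₂W hy₂B hb₂ hz₂
  have hCB : Disjoint C B := Finset.disjoint_right.2 fun x hx => hB2 C hC x hx
  exact statement_11_general hmin hη hηW hB hC.connectedOn hC.disjoint
    (Finset.disjoint_insert_right.2 ⟨hC.2.1, hCB⟩) hb₁ ⟨z, hzC, hG.1 y₁ z ▸ hz⟩ hy₂W hy₂B hb₂ hz₂
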